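/- arXiv:1011.5160 — 2 statements merged into one kernel-verified Lean document; each statement's English description precedes it below -/
import Mathlib

section
/- Let e₁, e₂, e₃ be orthonormal vectors in E, let φ ∈ (0,π/2), and set v = sin φ e₂ + cos φ e₃. Then the curve ζ(t) = −sin φ sinh(t/2) e₁ + (cos²φ cosh(t/2) + sin²φ cosh t) e₂ − sin φ cos φ (cosh(t/2) − cosh t) e₃ satisfies the Jacobi equation 4ζ''(t) − ζ(t) − 3⟨ζ(t),v⟩v = 0 for all t ∈ ℝ, with initial conditions ζ(0) = e₂ and ζ'(0) = −(1/2)(sin φ) e₁. (This is the Jacobi field ζ_{P̄ξ} along a normal geodesic to W_w, written in the parallel frame (Z, P̄ξ, F̄ξ) with v representing Jξ.) -/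
/- Context: `E` is a real inner product space with a fixed unit vector `v`
(representing `Jγ̇` in a parallel orthonormal frame along a unit-speed geodesic `γ`
of `ℂH^n` of constant holomorphic sectional curvature `−1`). A smooth curve
`ζ : ℝ → E` satisfies the Jacobi equation of `ℂH^n` if
`4ζ'' − ζ − 3⟨ζ,v⟩v = 0`. -/

open scoped RealInnerProductSpace
open Real

/-- The derivative of `x ↦ sinh (x / 2)`. -/
theorem hasDerivAt_sinh_half (t : ℝ) :
    HasDerivAt (fun x : ℝ => sinh (x / 2)) (cosh (t / 2) * (1 / 2)) t :=
  ((hasDerivAt_id t).div_const 2).sinh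

/-- The derivative of `x ↦ cosh (x / 2)`. -/
theorem hasDerivAt_cosh_half (t : ℝ) :
    HasDerivAt (fun x : ℝ => cosh (x / 2)) (sinh (t / 2) * (1 / 2)) t :=
  ((hasDerivAt_id t).div_const 2).cosh

/-- let `e₁, e₂, e₃` be orthonormal vectors in `E`, `φ ∈ (0,π/2)`,
and `v = sin φ e₂ + cos φ e₃`. Then
`ζ(t) = −sin φ sinh(t/2) e₁ + (cos²φ cosh(t/2) + sin²φ cosh t) e₂
− sin φ cos φ (cosh(t/2) − cosh t) e₃` satisfies the Jacobi equation
`4ζ''(t) − ζ(t) − 3⟨ζ(t),v⟩v = 0` for all `t ∈ ℝ`, with `ζ(0) = e₂` and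
`ζ'(0) = −(1/2)(sin φ) e₁`. (This is the Jacobi field `ζ_{P̄ξ}` along a normal
geodesic to `W_w`, in the parallel frame `(Z, P̄ξ, F̄ξ)`, `v` representing `Jξ`.) -/
theorem jacobi_field_P (E : Type*) [NormedAddCommGroup E]
    [InnerProductSpace ℝ E] (e₁ e₂ e₃ : E)
    (h1 : ‖e₁‖ = 1) (h2 : ‖e₂‖ = 1) (h3 : ‖e₃‖ = 1)
    (h12 : ⟪e₁, e₂⟫ = 0) (h13 : ⟪e₁, e₃⟫ = 0) (h23 : ⟪e₂, e₃⟫ = 0)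
    (φ : ℝ) (hφ : φ ∈ Set.Ioo 0 (π / 2)) (v : E)
    (hv : v = sin φ • e₂ + cos φ • e₃) (ζ : ℝ → E)
    (hζ : ∀ t, ζ t = -(sin φ * sinh (t / 2)) • e₁
      + (cos φ ^ 2 * cosh (t / 2) + sin φ ^ 2 * cosh t) • e₂
      - (sin φ * cos φ * (cosh (t / 2) - cosh t)) • e₃) :
    (∀ t : ℝ, (4 : ℝ) • deriv (deriv ζ) t - ζ t - (3 : ℝ) • ⟪ζ t, v⟫ • v = 0) ∧
    ζ 0 = e₂ ∧ deriv ζ 0 = -((2⁻¹ * sin φ) • e₁) := by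
  have hderiv : deriv ζ = fun t => -(sin φ * (cosh (t / 2) * (1 / 2))) • e₁
      + (cos φ ^ 2 * (sinh (t / 2) * (1 / 2)) + sin φ ^ 2 * sinh t) • e₂
      - (sin φ * cos φ * (sinh (t / 2) * (1 / 2) - sinh t)) • e₃ := by
    funext t
    rw [funext hζ]
    exact (((((hasDerivAt_sinh_half t).const_mul (sin φ)).neg.smul_const e₁).add
      ((((hasDerivAt_cosh_half t).const_mul (cos φ ^ 2)).add
        ((hasDerivAt_cosh t).const_mul (sin φ ^ 2))).smul_const e₂)).sub
      ((((hasDerivAt_cosh_half t).sub (hasDerivAt_cosh t)).const_mul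
        (sin φ * cos φ)).smul_const e₃)).deriv
  have hderiv2 (t : ℝ) : deriv (deriv ζ) t =
      -(sin φ * (sinh (t / 2) * (1 / 2) * (1 / 2))) • e₁
      + (cos φ ^ 2 * (cosh (t / 2) * (1 / 2) * (1 / 2)) + sin φ ^ 2 * cosh t) • e₂
      - (sin φ * cos φ * (cosh (t / 2) * (1 / 2) * (1 / 2) - cosh t)) • e₃ := by
    rw [hderiv]
    exact ((((((hasDerivAt_cosh_half t).mul_const (1 / 2)).const_mul
        (sin φ)).neg.smul_const e₁).add
      (((((hasDerivAt_sinh_half t).mul_const (1 / 2)).const_mul (cos φ ^ 2)).add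
        ((hasDerivAt_sinh t).const_mul (sin φ ^ 2))).smul_const e₂)).sub
      (((((hasDerivAt_sinh_half t).mul_const (1 / 2)).sub (hasDerivAt_sinh t)).const_mul
        (sin φ * cos φ)).smul_const e₃)).deriv
  have hinner (t : ℝ) : ⟪ζ t, v⟫ = sin φ * cosh t := by
    have h32 : ⟪e₃, e₂⟫ = 0 := by rw [real_inner_comm, h23]
    simp only [hζ, hv, inner_add_left, inner_add_right, inner_sub_left, real_inner_smul_left,
      real_inner_smul_right, real_inner_self_eq_norm_sq, h2, h3, h12, h13, h23, h32]
    linear_combination (sin φ * cosh t) * sin_sq_add_cos_sq φ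
  refine ⟨fun t => ?_, ?_, ?_⟩
  · rw [hderiv2, hinner, hζ, hv]
    module
  · rw [hζ]
    simp
  · rw [hderiv]
    simp [mul_comm]
end

section
/- For every r > 0 and every φ ∈ [0,π/2], the matrix M(r,φ) is invertible and tr(M'(r,φ) M(r,φ)^{-1}) = (3/2) tanh(r/2) + (1/2) coth(r/2), where M'(r,φ) denotes the entrywise derivative of M with respect to the first variable. In particular this trace is independent of φ. -/
/- Context: `M(t,φ)` is the 3×3 block, corresponding to the vectors `Z, P̄ξ, F̄ξ`,
of the endomorphism `D(t)` built from Jacobi fields along a geodesic normal to the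
submanifold `W_w` in `ℂH^n`, for a unit normal `ξ` of Kähler angle `φ`;
`M'(r,φ) M(r,φ)⁻¹` is the corresponding block of the shape operator of the tube of
radius `r` around `W_w`. Here `coth(r/2) = cosh(r/2)/sinh(r/2)`. -/

open Real

noncomputable section

/-- The 3×3 block `M(t,φ)` (in the basis `Z, P̄ξ, F̄ξ`) of the endomorphism `D(t)`
built from Jacobi fields along a geodesic normal to `W_w` in `ℂH^n`, for a unit
normal `ξ` of Kähler angle `φ`; the columns are the Jacobi fields `ζ_Z`,
`ζ_{P̄ξ}`, `ζ_{F̄ξ}`. -/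
def M (t φ : ℝ) : Matrix (Fin 3) (Fin 3) ℝ :=
  Matrix.of
    ![![cosh (t / 2),
        -(sin φ * sinh (t / 2)),
        0],
      ![-(sin φ * (cos φ ^ 2 + sin φ ^ 2 * cosh (t / 2)) * sinh (t / 2)),
        cos φ ^ 2 * cosh (t / 2) + sin φ ^ 2 * cosh t,
        2 * sin φ * cos φ * (cosh (t / 2) - 1) * sinh (t / 2)],
      ![-(cos φ * sin φ ^ 2 * (cosh (t / 2) - 1) * sinh (t / 2)),
        -(sin φ * cos φ * (cosh (t / 2) - cosh t)),
        2 * (1 + cos φ ^ 2 * (cosh (t / 2) - 1)) * sinh (t / 2)]]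

/-- The entrywise derivative `M'(r,φ)` of `M` with respect to the first variable. -/
def M' (r φ : ℝ) : Matrix (Fin 3) (Fin 3) ℝ :=
  Matrix.of fun i j => deriv (fun t => M t φ i j) r

/-- Jacobi's formula for the derivative of the determinant of a curve of 3×3 matrices. -/
theorem hasDerivAt_det_fin_three {A : ℝ → Matrix (Fin 3) (Fin 3) ℝ}
    {A' : Matrix (Fin 3) (Fin 3) ℝ} {r : ℝ}
    (hA : ∀ i j, HasDerivAt (fun t => A t i j) (A' i j) r) :
    HasDerivAt (fun t => (A t).det) (Matrix.trace (A' * (A r).adjugate)) r := by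
  simp only [Matrix.det_fin_three]
  have prod (i j k l m n : Fin 3) := ((hA i j).fun_mul (hA k l)).fun_mul (hA m n)
  refine ((((((prod 0 0 1 1 2 2).fun_sub (prod 0 0 1 2 2 1)).fun_sub
    (prod 0 1 1 0 2 2)).fun_add (prod 0 1 1 2 2 0)).fun_add
    (prod 0 2 1 0 2 1)).fun_sub (prod 0 2 1 1 2 0)).congr_deriv ?_
  simp [Matrix.trace_fin_three, Matrix.mul_apply, Fin.sum_univ_three,
    Matrix.adjugate_fin_three]
  ring

theorem det_M (t φ : ℝ) : (M t φ).det = 2 * sinh (t / 2) * cosh (t / 2) ^ 3 := by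
  have hcosh : cosh t = 2 * cosh (t / 2) ^ 2 - 1 := by
    have h := cosh_two_mul (t / 2)
    rw [mul_div_cancel₀ t two_ne_zero, sinh_sq] at h
    linear_combination h
  have hsinh : sinh (t / 2) ^ 3 = sinh (t / 2) * (cosh (t / 2) ^ 2 - 1) := by
    rw [← sinh_sq]; ring
  rw [Matrix.det_fin_three]
  simp [M, hcosh]
  generalize t / 2 = u at hsinh ⊢
  ring_nf
  simp only [hsinh, cos_sq', show cos φ ^ 4 = (1 - sin φ ^ 2) ^ 2 by rw [← cos_sq']; ring]
  ring

theorem hasDerivAt_M_apply (r φ : ℝ) (i j : Fin 3) :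
    HasDerivAt (fun t => M t φ i j) (M' r φ i j) r := by
  refine DifferentiableAt.hasDerivAt ?_
  fin_cases i <;> fin_cases j <;> simp [M] <;> fun_prop

/-- for every `r > 0` and every `φ ∈ [0,π/2]`, the matrix `M(r,φ)`
is invertible and `tr(M'(r,φ) M(r,φ)⁻¹) = (3/2) tanh(r/2) + (1/2) coth(r/2)`.
In particular this trace is independent of `φ`. -/
theorem trace_block (r : ℝ) (hr : 0 < r) (φ : ℝ) (hφ : φ ∈ Set.Icc 0 (π / 2)) :
    IsUnit (M r φ) ∧
    Matrix.trace (M' r φ * (M r φ)⁻¹)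
      = 3 / 2 * tanh (r / 2) + 1 / 2 * (cosh (r / 2) / sinh (r / 2)) := by
  have hs : sinh (r / 2) ≠ 0 := (sinh_pos_iff.2 (half_pos hr)).ne'
  have hc : cosh (r / 2) ≠ 0 := (cosh_pos _).ne'
  have hdet : (M r φ).det ≠ 0 := by
    rw [det_M]
    positivity
  refine ⟨(Matrix.isUnit_iff_isUnit_det _).2 hdet.isUnit, ?_⟩
  have hhalf : HasDerivAt (fun t : ℝ => t / 2) (1 / 2) r := (hasDerivAt_id r).div_const 2
  have hjacobi := hasDerivAt_det_fin_three (hasDerivAt_M_apply r φ)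
  simp only [det_M] at hjacobi
  have htrace := hjacobi.unique ((hhalf.sinh.const_mul 2).fun_mul (hhalf.cosh.fun_pow 3))
  rw [Matrix.inv_def, Ring.inverse_eq_inv', Matrix.mul_smul, Matrix.trace_smul, htrace, det_M,
    tanh_eq_sinh_div_cosh, smul_eq_mul]
  field_simp
  push_cast
  ring
end
end
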